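/- arXiv:2411.00835 — 2 statements merged into one kernel-verified Lean document; each statement's English description precedes it below -/
import Mathlib

section
/- Let N and D be positive integers with N ≥ 2, let Ã ∈ ℝ^{N×N} be the matrix with every entry equal to 1/N, and let W ∈ ℝ^{D×D} be any matrix. Then even the full class {g ∘ L : g ∈ C(ℝ^{N×D}, ℝ)}, where L(X) = ÃXW and g ranges over ALL continuous functions from ℝ^{N×D} to ℝ, is not dense in C(ℝ^{N×D}, ℝ) for the topology of uniform convergence on compact sets: there exist a continuous f : ℝ^{N×D} → ℝ, an ε > 0, and a nonempty compact K ⊂ ℝ^{N×D} such that max_{X∈K} |f(X) − g(L(X))| ≥ ε for every continuous g : ℝ^{N×D} → ℝ. -/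
/-! If `L x = L y`, then `g ∘ L` takes the same value at `x` and `y`, so at one of the two points it
is at least `|f x - f y| / 2` away from `f`. The map `X ↦ Ã X W` has such a collision because the
columns of `Ã` coincide: repeat the `i`-th, respectively the `j`-th, basis vector in every column
of `X`. -/

open Function

theorem exists_mem_pair_half_dist_le {X Y E : Type*} [PseudoMetricSpace E] {L : X → Y} {x y : X}
    (hxy : L x = L y) (f : X → E) (g : Y → E) :
    ∃ z ∈ ({x, y} : Set X), dist (f x) (f y) / 2 ≤ dist (f z) (g (L z)) := by
  by_contra! hclose
  have hx := hclose x (by simp)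
  have hy := hclose y (by simp)
  rw [← hxy] at hy
  linarith [dist_triangle_right (f x) (f y) (g (L x))]

theorem exists_continuous_forall_exists_le_abs_sub_comp_of_not_injective {X Y : Type*}
    [TopologicalSpace X] [T35Space X] {L : X → Y} (hL : ¬ Injective L) :
    ∃ f : X → ℝ, Continuous f ∧ ∃ ε > (0 : ℝ), ∃ K : Set X, IsCompact K ∧ K.Nonempty ∧
      ∀ g : Y → ℝ, ∃ x ∈ K, ε ≤ |f x - g (L x)| := by
  obtain ⟨x, y, hxy, hne⟩ := not_injective_iff.mp hL
  obtain ⟨f, hf, hfxy⟩ := separatesPoints_continuous_of_t35Space hne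
  exact ⟨f, hf, dist (f x) (f y) / 2, half_pos (dist_pos.mpr hfxy), {x, y},
    (Set.toFinite _).isCompact, Set.insert_nonempty x {y}, exists_mem_pair_half_dist_le hxy f⟩

section Matrix

variable {m n p q R : Type*} [Fintype n]

theorem not_injective_mulVec_of_col_eq [NonAssocSemiring R] [Nontrivial R] {A : Matrix m n R}
    {i j : n} (hij : i ≠ j) (hA : A.col i = A.col j) : ¬ Injective A.mulVec := by
  classical
  intro hinj
  have hsingle : (Pi.single i 1 : n → R) = Pi.single j 1 :=
    hinj (by simpa only [Matrix.mulVec_single_one] using hA)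
  simpa [hij] using congrFun hsingle i

theorem not_injective_mul_mul_of_not_injective_mulVec [Fintype p] [Nonempty p]
    [NonUnitalNonAssocSemiring R] {A : Matrix m n R} (hA : ¬ Injective A.mulVec)
    (W : Matrix p q R) : ¬ Injective fun X : Matrix n p R ↦ A * X * W := fun hinj ↦
  hA fun v w hvw ↦ Matrix.replicateCol_injective (ι := p) <| hinj <| by
    simp only [← Matrix.replicateCol_mulVec, hvw]

theorem stmt_4_general [Fintype p] [Nonempty p] {A : Matrix m n ℝ} (hA : ¬ Injective A.mulVec)
    (W : Matrix p q ℝ) :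
    ∃ f : Matrix n p ℝ → ℝ, Continuous f ∧ ∃ ε > (0 : ℝ), ∃ K : Set (Matrix n p ℝ),
      IsCompact K ∧ K.Nonempty ∧ ∀ g : Matrix m q ℝ → ℝ, ∃ X ∈ K, ε ≤ |f X - g (A * X * W)| :=
  have : T35Space (Matrix n p ℝ) := inferInstanceAs (T35Space (n → p → ℝ))
  exists_continuous_forall_exists_le_abs_sub_comp_of_not_injective
    (not_injective_mul_mul_of_not_injective_mulVec hA W)

end Matrix

/-- For `N ≥ 2`, `D ≥ 1`, `Ã` the matrix with all entries `1/N` and any `W ∈ ℝ^{D×D}`,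
even the full class `{g ∘ L : g ∈ C(ℝ^{N×D}, ℝ)}` with `L(X) = Ã X W` is not dense in
`C(ℝ^{N×D}, ℝ)` for the topology of uniform convergence on compact sets. -/
theorem stmt_4 (N D : ℕ) (hN : 2 ≤ N) (hD : 0 < D)
    (Atil : Matrix (Fin N) (Fin N) ℝ) (hA : ∀ i j, Atil i j = 1 / N)
    (W : Matrix (Fin D) (Fin D) ℝ) :
    ∃ f : Matrix (Fin N) (Fin D) ℝ → ℝ, Continuous f ∧
      ∃ ε > (0 : ℝ), ∃ K : Set (Matrix (Fin N) (Fin D) ℝ), IsCompact K ∧ K.Nonempty ∧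
        ∀ g : Matrix (Fin N) (Fin D) ℝ → ℝ, Continuous g →
          ∃ X ∈ K, ε ≤ |f X - g (Atil * X * W)| := by
  have : Nonempty (Fin D) := Fin.pos_iff_nonempty.mp hD
  have hij : (⟨0, by omega⟩ : Fin N) ≠ ⟨1, by omega⟩ := by simp
  have hker := not_injective_mulVec_of_col_eq hij (A := Atil) (by ext; simp [hA])
  obtain ⟨f, hf, ε, hε, K, hK, hne, hfar⟩ := stmt_4_general hker W
  exact ⟨f, hf, ε, hε, K, hK, hne, fun g _ ↦ hfar g⟩
end

section
/- Let N and D be positive integers, let Ã ∈ ℝ^{N×N} be the matrix with every entry equal to 1/N, fix 0 < ς < 1/(9·D^{3/2}), and let W be a D×D random matrix whose entries are independent Gaussian random variables with mean 0 and variance ς². Then with probability at least 1 − e^{−D/2} over the draw of W, the class of functions f̂ : ℝ^{N×D} → ℝ of the form f̂ = MLP ∘ L_W, where L_W(X) = ÃXW + X and MLP ranges over all multilayer perceptrons with SiLU activation from ℝ^{N×D} to ℝ, is dense in C(ℝ^{N×D}, ℝ) for the topology of uniform convergence on compact sets; that is, the measure of the set of W ∈ ℝ^{D×D} for which this class is a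 universal approximator is at least 1 − e^{−D/2}. -/
/-- The SiLU activation function: `SiLU(x) = x / (1 + e^{-x})`. -/
noncomputable def silu (x : ℝ) : ℝ := x / (1 + Real.exp (-x))

/-- `IsMLPLayer V k g` says that `g : V → ℝ^k` has the form
`A_L ∘ σ ∘ A_{L-1} ∘ ⋯ ∘ σ ∘ A_0` where each `A_i` is an affine map and `σ` applies
SiLU componentwise (the base case `L = 0` being a single affine map). -/
inductive IsMLPLayer (V : Type) [AddCommGroup V] [Module ℝ V] :
    (k : ℕ) → (V → (Fin k → ℝ)) → Prop
  | affine (k : ℕ) (A : V →ᵃ[ℝ] (Fin k → ℝ)) : IsMLPLayer V k ⇑A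
  | step (m k : ℕ) (A : (Fin m → ℝ) →ᵃ[ℝ] (Fin k → ℝ)) (g : V → Fin m → ℝ)
      (hg : IsMLPLayer V m g) : IsMLPLayer V k (fun v => A (fun i => silu (g v i)))

/-- A multilayer perceptron with SiLU activation from `V` to `ℝ`:
a map of the form `A_L ∘ σ ∘ A_{L-1} ∘ ⋯ ∘ σ ∘ A_0` with each `A_i` affine and
`σ` the componentwise SiLU activation. -/
def IsSiluMLP (V : Type) [AddCommGroup V] [Module ℝ V] (f : V → ℝ) : Prop :=
  (∃ A : V →ᵃ[ℝ] ℝ, f = ⇑A) ∨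
  (∃ (m : ℕ) (A : (Fin m → ℝ) →ᵃ[ℝ] ℝ) (g : V → Fin m → ℝ),
    IsMLPLayer V m g ∧ f = fun v => A (fun i => silu (g v i)))

open MeasureTheory ProbabilityTheory

/-!
The exponential is a limit of rescaled SiLUs, `-(eˢ / s) silu (x - s) → eˣ` as `s → ∞`, locally
uniformly in `x`. Hence the closure of the networks with one hidden layer contains all functions
`exp ∘ φ` with `φ` a continuous linear functional. These are closed under multiplication, so their
span is an algebra, and Stone–Weierstrass gives universality, also after precomposition with a
continuous injection.

It remains to see that `X ↦ A X W + X` is almost surely injective. Its determinant along the line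
`t ↦ t W` is a polynomial in `t` with value `1` at `t = 0`, so it has finitely many zeros on each
such line, and by Fubini its zero set in `W` is null.
-/

open Filter Topology Module

section Silu

lemma continuous_silu : Continuous silu :=
  continuous_id.div (by fun_prop) fun x => by positivity

lemma rescaled_silu_eq {s : ℝ} (hs : s ≠ 0) (x : ℝ) :
    -(Real.exp s / s) * silu (x - s) =
      Real.exp x * ((1 - x / s) / (1 + Real.exp (x - s))) := by
  rw [silu, neg_sub, Real.exp_sub, Real.exp_sub]
  field_simp
  ring

lemma tendstoLocallyUniformly_rescaled_silu :
    TendstoLocallyUniformly (fun s x : ℝ => -(Real.exp s / s) * silu (x - s)) Real.exp atTop := by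
  rw [tendstoLocallyUniformly_iff_forall_tendsto]
  intro x
  have hs : Tendsto Prod.fst (atTop ×ˢ 𝓝 x : Filter (ℝ × ℝ)) atTop := tendsto_fst
  have hy : Tendsto Prod.snd (atTop ×ˢ 𝓝 x : Filter (ℝ × ℝ)) (𝓝 x) := tendsto_snd
  have hexp : Tendsto (fun p : ℝ × ℝ => Real.exp p.2) (atTop ×ˢ 𝓝 x) (𝓝 (Real.exp x)) :=
    (Real.continuous_exp.tendsto x).comp hy
  have hexp_sub : Tendsto (fun p : ℝ × ℝ => Real.exp (p.2 - p.1)) (atTop ×ˢ 𝓝 x) (𝓝 0) :=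
    Real.tendsto_exp_atBot.comp (hy.add_atBot (tendsto_neg_atTop_atBot.comp hs))
  have hlim : Tendsto (fun p : ℝ × ℝ => -(Real.exp p.1 / p.1) * silu (p.2 - p.1))
      (atTop ×ˢ 𝓝 x) (𝓝 (Real.exp x)) := by
    have h := hexp.mul (((hy.div_atTop hs).const_sub 1).div (hexp_sub.const_add 1) (by simp))
    rw [sub_zero, add_zero, div_one, mul_one] at h
    refine h.congr' ?_
    filter_upwards [hs.eventually_ne_atTop 0] with p hp using (rescaled_silu_eq hp p.2).symm
  exact (hexp.prodMk_nhds hlim).mono_right (nhds_le_uniformity _)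

end Silu

section UniversalApproximation

variable {V : Type} [AddCommGroup V] [Module ℝ V] [TopologicalSpace V]

/-- The neuron `x ↦ silu (φ x + b)` with weight `φ` and bias `b`. -/
noncomputable def siluNeuron (φ : StrongDual ℝ V) (b : ℝ) : C(V, ℝ) where
  toFun x := silu (φ x + b)
  continuous_toFun := continuous_silu.comp (by fun_prop)

variable (V) in
/-- The functions computed by SiLU networks with a single hidden layer, that is, the linear
combinations of neurons. -/
noncomputable def shallowNetworks : Submodule ℝ C(V, ℝ) :=
  Submodule.span ℝ (Set.range fun p : StrongDual ℝ V × ℝ => siluNeuron p.1 p.2)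

lemma isSiluMLP_of_mem_shallowNetworks {g : C(V, ℝ)} (hg : g ∈ shallowNetworks V) :
    IsSiluMLP V g := by
  obtain ⟨m, c, neuron, rfl⟩ := Submodule.mem_span_set'.1 hg
  choose p hp using fun i => (neuron i).2
  let hidden : V →ᵃ[ℝ] (Fin m → ℝ) := AffineMap.pi fun i =>
    (p i).1.toLinearMap.toAffineMap + AffineMap.const ℝ V (p i).2
  let output : (Fin m → ℝ) →ₗ[ℝ] ℝ := ∑ i, c i • LinearMap.proj i
  refine .inr ⟨m, output.toAffineMap, hidden, .affine m hidden, funext fun v => ?_⟩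
  simp [output, hidden, ← hp, siluNeuron]

/-- The functions `exp ∘ φ` with `φ` a continuous linear functional, as a homomorphism turning sums
of functionals into products of functions. -/
noncomputable def expDual : Multiplicative (StrongDual ℝ V) →* C(V, ℝ) where
  toFun φ := ⟨fun x => Real.exp (φ.toAdd x), by fun_prop⟩
  map_one' := by ext; simp
  map_mul' φ ψ := by ext; simp [Real.exp_add]

lemma expDual_mem_closure_shallowNetworks (φ : Multiplicative (StrongDual ℝ V)) :
    expDual φ ∈ (shallowNetworks V).topologicalClosure := by
  have hlim : Tendsto (fun s : ℝ => -(Real.exp s / s) • siluNeuron φ.toAdd (-s)) atTop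
      (𝓝 (expDual φ)) :=
    ContinuousMap.tendsto_of_tendstoLocallyUniformly
      (tendstoLocallyUniformly_rescaled_silu.comp φ.toAdd φ.toAdd.continuous)
  exact mem_closure_of_tendsto hlim <| .of_forall fun s =>
    Submodule.smul_mem _ _ (Submodule.subset_span ⟨(φ.toAdd, -s), rfl⟩)

variable (V) in
/-- The algebra of functions generated by the exponentials of continuous linear functionals. -/
noncomputable def expAlgebra : Subalgebra ℝ C(V, ℝ) :=
  Algebra.adjoin ℝ (MonoidHom.mrange (expDual (V := V)))

lemma expAlgebra_le_closure_shallowNetworks :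
    Subalgebra.toSubmodule (expAlgebra V) ≤ (shallowNetworks V).topologicalClosure := by
  rw [expAlgebra, Algebra.adjoin_eq_span, Submonoid.closure_eq, Submodule.span_le]
  rintro _ ⟨φ, rfl⟩
  exact expDual_mem_closure_shallowNetworks φ

lemma separatesPoints_expAlgebra [SeparatingDual ℝ V] : (expAlgebra V).SeparatesPoints := by
  intro x y hxy
  obtain ⟨φ, hφ⟩ := SeparatingDual.exists_separating_of_ne (R := ℝ) hxy
  exact ⟨_, ⟨expDual (.ofAdd φ), Algebra.subset_adjoin ⟨_, rfl⟩, rfl⟩,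
    Real.exp_injective.ne hφ⟩

lemma exists_mem_abs_sub_lt_of_mem_closure {X : Type*} [TopologicalSpace X] {S : Set C(X, ℝ)}
    {f : C(X, ℝ)} (hf : f ∈ closure S) {K : Set X} (hK : IsCompact K) {ε : ℝ} (hε : 0 < ε) :
    ∃ g ∈ S, ∀ x ∈ K, |f x - g x| < ε := by
  have hnhds : ∀ᶠ g : C(X, ℝ) in 𝓝 f, ∀ x ∈ K, dist (f x) (g x) < ε :=
    Metric.tendstoUniformlyOn_iff.1
      (ContinuousMap.tendsto_iff_forall_isCompact_tendstoUniformlyOn.1 tendsto_id K hK) ε hε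
  obtain ⟨g, hg, hgS⟩ := mem_closure_iff_nhds.1 hf _ hnhds
  exact ⟨g, hgS, hg⟩

theorem exists_isSiluMLP_comp_abs_sub_lt [SeparatingDual ℝ V] {X : Type*} [TopologicalSpace X]
    {L : C(X, V)} (hL : Function.Injective L) (f : C(X, ℝ)) {K : Set X} (hK : IsCompact K)
    {ε : ℝ} (hε : 0 < ε) :
    ∃ mlp : V → ℝ, IsSiluMLP V mlp ∧ ∀ x ∈ K, |f x - mlp (L x)| < ε := by
  have hsep : ((expAlgebra V).map (L.compRightAlgHom ℝ ℝ)).SeparatesPoints := by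
    intro x y hxy
    obtain ⟨_, ⟨g, hg, rfl⟩, hgxy⟩ := separatesPoints_expAlgebra (hL.ne hxy)
    exact ⟨_, ⟨_, ⟨g, hg, rfl⟩, rfl⟩, hgxy⟩
  obtain ⟨_, ⟨g, hg, rfl⟩, hgf⟩ :=
    ContinuousMap.exists_mem_subalgebra_near_continuous_of_isCompact_of_separatesPoints
      hsep f hK (half_pos hε)
  obtain ⟨h, hh, hgh⟩ := exists_mem_abs_sub_lt_of_mem_closure
    (expAlgebra_le_closure_shallowNetworks hg) (hK.image L.continuous) (half_pos hε)
  refine ⟨h, isSiluMLP_of_mem_shallowNetworks hh, fun x hx => ?_⟩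
  calc |f x - h (L x)| ≤ |f x - g (L x)| + |g (L x) - h (L x)| := abs_sub_le _ _ _
    _ < ε / 2 + ε / 2 :=
      add_lt_add (by rw [abs_sub_comm]; exact hgf x hx) (hgh _ (Set.mem_image_of_mem L hx))
    _ = ε := add_halves ε

end UniversalApproximation

section GenericInvertibility

variable {E : Type*} [NormedAddCommGroup E] [NormedSpace ℝ E] [FiniteDimensional ℝ E]
  [MeasurableSpace E] [BorelSpace E]

lemma ae_mem_of_forall_ae_smul_mem (μ : Measure E) [μ.IsAddHaarMeasure] {s : Set E}
    (hs : MeasurableSet s) (h : ∀ x, ∀ᵐ t : ℝ, t • x ∈ s) : ∀ᵐ x ∂μ, x ∈ s := by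
  have hswap : ∀ᵐ t : ℝ, ∀ᵐ x ∂μ, t • x ∈ s :=
    (Measure.ae_ae_comm (p := fun x (t : ℝ) => t • x ∈ s)
      ((measurable_snd.smul measurable_fst) hs)).1 (.of_forall h)
  obtain ⟨t, hts, ht0⟩ := (hswap.and (Measure.ae_ne volume (0 : ℝ))).exists
  filter_upwards [(Measure.quasiMeasurePreserving_smul μ (inv_ne_zero ht0)).ae hts] with x hx
  rwa [smul_inv_smul₀ ht0] at hx

lemma finite_setOf_det_one_add_smul_eq_zero {R ι : Type*} [CommRing R] [IsDomain R] [Fintype ι]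
    [DecidableEq ι] (M : Matrix ι ι R) : {t : R | (1 + t • M).det = 0}.Finite := by
  have heval (t : R) : (-M).charpolyRev.eval t = (1 + t • M).det := by
    rw [Matrix.charpolyRev, ← Polynomial.coe_evalRingHom, RingHom.map_det]
    congr 1
    ext i j
    simp [Matrix.one_apply, apply_ite (Polynomial.eval t), mul_comm t]
  have hne : (-M).charpolyRev ≠ 0 := fun h => by
    simpa [h] using (-M).eval_charpolyRev
  exact (Polynomial.finite_setOfPred_isRoot hne).subset fun t ht => (heval t).trans ht

lemma ae_det_one_add_ne_zero (μ : Measure E) [μ.IsAddHaarMeasure] {ι : Type*} [Fintype ι]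
    [DecidableEq ι] (T : E →ₗ[ℝ] Matrix ι ι ℝ) : ∀ᵐ x ∂μ, (1 + T x).det ≠ 0 := by
  have hcont : Continuous fun x => (1 + T x).det :=
    (continuous_const.add T.continuous_of_finiteDimensional).matrix_det
  refine ae_mem_of_forall_ae_smul_mem μ (s := {x | (1 + T x).det ≠ 0})
    (hcont.measurable (measurableSet_singleton 0).compl) fun x => ?_
  filter_upwards [(finite_setOf_det_one_add_smul_eq_zero (T x)).countable.ae_notMem volume]
    with t ht
  simpa using ht

lemma ae_injective_one_add (μ : Measure E) [μ.IsAddHaarMeasure] {F : Type*} [AddCommGroup F]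
    [Module ℝ F] [FiniteDimensional ℝ F] (T : E →ₗ[ℝ] End ℝ F) :
    ∀ᵐ x ∂μ, Function.Injective ⇑(1 + T x) := by
  let b := finBasis ℝ F
  filter_upwards [ae_det_one_add_ne_zero μ ((LinearMap.toMatrix b b).toLinearMap ∘ₗ T)] with x hx
  have hdet : LinearMap.det (1 + T x) ≠ 0 := by
    simpa [← LinearMap.det_toMatrix b, LinearMap.toMatrix_one] using hx
  exact (LinearMap.equivOfDetNeZero _ hdet).injective

lemma ae_injective_mul_mul_add {n d : Type*} [Fintype n] [Fintype d] (A : Matrix n n ℝ) :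
    ∀ᵐ W : d → d → ℝ, Function.Injective fun X : Matrix n d ℝ => A * X * Matrix.of W + X := by
  let T : (d → d → ℝ) →ₗ[ℝ] End ℝ (Matrix n d ℝ) :=
    (mulLinearMap ℝ).flip.compl₂ (mulLeftLinearMap d ℝ A) ∘ₗ (Matrix.ofLinearEquiv ℝ).toLinearMap
  have hT (W) : ⇑(1 + T W) = fun X => A * X * Matrix.of W + X := funext fun X => add_comm X _
  exact (ae_injective_one_add volume T).mono fun W hW => hT W ▸ hW

end GenericInvertibility

section ProductMeasure

lemma absolutelyContinuous_pi {ι : Type*} [Fintype ι] {α : ι → Type*}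
    [∀ i, MeasurableSpace (α i)] {μ ν : ∀ i, Measure (α i)} [∀ i, SigmaFinite (μ i)]
    [∀ i, SigmaFinite (ν i)] (h : ∀ i, μ i ≪ ν i) : Measure.pi μ ≪ Measure.pi ν := by
  revert α h
  refine Fintype.induction_empty_option (P := fun ι _ => ∀ {α : ι → Type _}
    [∀ i, MeasurableSpace (α i)] {μ ν : ∀ i, Measure (α i)} [∀ i, SigmaFinite (μ i)]
    [∀ i, SigmaFinite (ν i)], (∀ i, μ i ≪ ν i) → Measure.pi μ ≪ Measure.pi ν) ?_ ?_ ?_ ι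
  · intro ι κ _ e ih α _ μ ν _ _ h
    let := Fintype.ofEquiv κ e.symm
    rw [← (measurePreserving_piCongrLeft μ e).map_eq, ← (measurePreserving_piCongrLeft ν e).map_eq]
    exact (ih fun i => h (e i)).map (MeasurableEquiv.measurable _)
  · intro α _ μ ν _ _ _
    rw [Measure.pi_of_empty, Measure.pi_of_empty]
  · intro ι _ ih α _ μ ν _ _ h
    rw [← Measure.pi_map_piOptionEquivProd, ← Measure.pi_map_piOptionEquivProd]
    exact ((ih fun i => h (some i)).prod (h none)).map (MeasurableEquiv.measurable _)

lemma pi_gaussianReal_absolutelyContinuous {ι κ : Type*} [Fintype ι] [Fintype κ] (m : ℝ)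
    {v : NNReal} (hv : v ≠ 0) :
    (Measure.pi fun _ : ι => Measure.pi fun _ : κ => gaussianReal m v) ≪ volume :=
  absolutelyContinuous_pi fun _ => absolutelyContinuous_pi fun _ =>
    gaussianReal_absolutelyContinuous m hv

end ProductMeasure

theorem stmt_13_general {n d : Type} [Fintype n] [Fintype d] (A : Matrix n n ℝ)
    {μ : Measure (d → d → ℝ)} (hμ : μ ≪ volume) :
    ∀ᵐ W ∂μ, ∀ f : Matrix n d ℝ → ℝ, Continuous f → ∀ ε > (0 : ℝ), ∀ K : Set (Matrix n d ℝ),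
      IsCompact K → ∃ mlp : Matrix n d ℝ → ℝ, IsSiluMLP _ mlp ∧
        ∀ X ∈ K, |f X - mlp (A * X * Matrix.of W + X)| < ε := by
  have : SeparatingDual ℝ (Matrix n d ℝ) := inferInstanceAs (SeparatingDual ℝ (n → d → ℝ))
  filter_upwards [hμ.ae_le (ae_injective_mul_mul_add A)] with W hW f hf ε hε K hK
  have hcont : Continuous fun X : Matrix n d ℝ => A * X * Matrix.of W + X := by fun_prop
  exact exists_isSiluMLP_comp_abs_sub_lt (L := ⟨_, hcont⟩) hW ⟨f, hf⟩ hK hε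

/-- **Universality regained (random initialization).** Let `Ã` be the matrix with all
entries `1/N`, fix `0 < ς < 1/(9 D^{3/2})`, and let `W` be a `D × D` random matrix with
i.i.d. Gaussian `N(0, ς²)` entries. Then, with probability at least `1 - e^{-D/2}`, the
class of maps `MLP ∘ L_W`, where `L_W(X) = Ã X W + X` and `MLP` ranges over SiLU
multilayer perceptrons `ℝ^{N×D} → ℝ`, is dense in `C(ℝ^{N×D}, ℝ)` for the topology of
uniform convergence on compact sets. -/
theorem stmt_13 (N D : ℕ) (hN : 0 < N) (hD : 0 < D)
    (Atil : Matrix (Fin N) (Fin N) ℝ) (hA : ∀ i j, Atil i j = 1 / N)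
    (ς : ℝ) (hς0 : 0 < ς) (hς1 : ς < 1 / (9 * (D : ℝ) ^ ((3 : ℝ) / 2))) :
    ENNReal.ofReal (1 - Real.exp (-(D : ℝ) / 2)) ≤
      (Measure.pi fun _ : Fin D => Measure.pi fun _ : Fin D =>
          gaussianReal 0 ⟨ς ^ 2, sq_nonneg ς⟩)
        {W : Fin D → Fin D → ℝ |
          ∀ f : Matrix (Fin N) (Fin D) ℝ → ℝ, Continuous f →
            ∀ ε > (0 : ℝ), ∀ K : Set (Matrix (Fin N) (Fin D) ℝ), IsCompact K → K.Nonempty →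
              ∃ mlp : Matrix (Fin N) (Fin D) ℝ → ℝ, IsSiluMLP _ mlp ∧
                ∀ X ∈ K, |f X - mlp (Atil * X * Matrix.of W + X)| < ε} := by
  have hv : (⟨ς ^ 2, sq_nonneg ς⟩ : NNReal) ≠ 0 := fun h =>
    (pow_pos hς0 2).ne' (congrArg NNReal.toReal h)
  -- Instance search does not see the variance through the anonymous constructor.
  have : IsProbabilityMeasure (gaussianReal 0 ⟨ς ^ 2, sq_nonneg ς⟩) :=
    instIsProbabilityMeasureGaussianReal 0 _
  calc ENNReal.ofReal (1 - Real.exp (-(D : ℝ) / 2))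
    _ ≤ 1 := ENNReal.ofReal_le_one.2 (sub_le_self _ (Real.exp_pos _).le)
    _ = (Measure.pi fun _ : Fin D => Measure.pi fun _ : Fin D =>
          gaussianReal 0 ⟨ς ^ 2, sq_nonneg ς⟩) Set.univ := measure_univ.symm
    _ ≤ _ := measure_mono_ae <|
      (stmt_13_general Atil (pi_gaussianReal_absolutelyContinuous 0 hv)).mono
        fun W hW _ f hf ε hε K hK _ => hW f hf ε hε K hK
end
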